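/- arXiv:2208.10319 — 4 statements merged into one kernel-verified Lean document; each statement's English description precedes it below -/
import Mathlib

section
/- Let Λ : [0,∞) × [0,∞) → ℝ be concave, positively homogeneous of degree 1 (i.e., Λ(ax, ay) = aΛ(x, y) for all a > 0 and x, y ≥ 0), and satisfy 0 ≤ Λ(x, y) ≤ min(x, y) for all x, y ≥ 0. Then Λ is continuous on [0,∞) × [0,∞). -/
/-!
Concavity together with homogeneity makes `Λ` superadditive, so, being nonnegative, it is
nondecreasing in each coordinate. Conversely, for `0 ≤ x ≤ X` the point `(x, y)` lies on the segment
from `(0, y)` to `(X, y)`, so concavity gives `x Λ(X, y) ≤ X Λ(x, y)`; combined with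
`Λ(X, y) ≤ X` this bounds the increment `Λ(X, y) - Λ(x, y)` by `X - x`. The same holds in the
second coordinate, so `Λ` is 2-Lipschitz for the sup distance on the closed quadrant, boundary
included.
-/

/-- Superadditivity and nonnegativity make `Λ` monotone. -/
lemma tail_mono (Λ : ℝ × ℝ → ℝ)
    (hconc : ConcaveOn ℝ (Set.Ici 0 ×ˢ Set.Ici 0) Λ)
    (hhom : ∀ a : ℝ, 0 < a → ∀ x y : ℝ, 0 ≤ x → 0 ≤ y →
      Λ (a * x, a * y) = a * Λ (x, y))
    (hbds : ∀ x y : ℝ, 0 ≤ x → 0 ≤ y → 0 ≤ Λ (x, y) ∧ Λ (x, y) ≤ min x y)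
    {x y X Y : ℝ} (hx : 0 ≤ x) (hy : 0 ≤ y) (hX : x ≤ X) (hY : y ≤ Y) :
    Λ (x, y) ≤ Λ (X, Y) := by
  have hX' : 0 ≤ X - x := sub_nonneg.2 hX
  have hY' : 0 ≤ Y - y := sub_nonneg.2 hY
  have h := hconc.2 (show (x, y) ∈ (Set.Ici 0 ×ˢ Set.Ici 0 : Set (ℝ × ℝ)) from ⟨hx, hy⟩)
    (show (X - x, Y - y) ∈ (Set.Ici 0 ×ˢ Set.Ici 0 : Set (ℝ × ℝ)) from ⟨hX', hY'⟩)
    (show (0 : ℝ) ≤ 1 / 2 by norm_num) (show (0 : ℝ) ≤ 1 / 2 by norm_num) (by norm_num)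
  have e : (1 / 2 : ℝ) • (x, y) + (1 / 2 : ℝ) • (X - x, Y - y) = (1 / 2 * X, 1 / 2 * Y) := by
    ext <;> simp <;> ring
  rw [e, hhom _ (by norm_num) X Y (hx.trans hX) (hy.trans hY)] at h
  have h0 := (hbds _ _ hX' hY').1
  simp only [smul_eq_mul] at h
  linarith

/-- A concave function `f` on `[0, ∞)` with `0 ≤ f t ≤ t` has increments bounded by those of
the identity. -/
lemma increment_le {f : ℝ → ℝ} (hf : ConcaveOn ℝ (Set.Ici 0) f)
    (h0 : ∀ t, 0 ≤ t → 0 ≤ f t) (h1 : ∀ t, 0 ≤ t → f t ≤ t)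
    {x X : ℝ} (hx : 0 ≤ x) (hX : x ≤ X) : f X ≤ f x + (X - x) := by
  rcases hx.eq_or_lt with rfl | hx'
  · linarith [h1 X hX, h0 0 le_rfl]
  have hXp : 0 < X := hx'.trans_le hX
  have h := hf.2 (Set.mem_Ici.2 hXp.le) (Set.mem_Ici.2 (le_refl (0 : ℝ)))
    (div_nonneg hx hXp.le) (div_nonneg (sub_nonneg.2 hX) hXp.le) (by field_simp; ring)
  have e : (x / X) • X + ((X - x) / X) • (0 : ℝ) = x := by
    simp only [smul_eq_mul]; field_simp; ring
  rw [e] at h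
  simp only [smul_eq_mul] at h
  have hb : 0 ≤ (X - x) / X := div_nonneg (sub_nonneg.2 hX) hXp.le
  have h2 := mul_nonneg hb (h0 0 le_rfl)
  have h3 := mul_le_mul_of_nonneg_left (h1 X hXp.le) hb
  have e2 : (X - x) / X * X = X - x := by field_simp
  have e3 : (X - x) / X * f X = f X - x / X * f X := by field_simp
  linarith

/-- Every tail dependence function (concave, positively homogeneous of degree 1,
bounded between `0` and `min x y` on the nonnegative quadrant) is continuous on
the nonnegative quadrant. -/
theorem tail_dependence_function_continuous (Λ : ℝ × ℝ → ℝ)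
    (hconc : ConcaveOn ℝ (Set.Ici 0 ×ˢ Set.Ici 0) Λ)
    (hhom : ∀ a : ℝ, 0 < a → ∀ x y : ℝ, 0 ≤ x → 0 ≤ y →
      Λ (a * x, a * y) = a * Λ (x, y))
    (hbds : ∀ x y : ℝ, 0 ≤ x → 0 ≤ y → 0 ≤ Λ (x, y) ∧ Λ (x, y) ≤ min x y) :
    ContinuousOn Λ (Set.Ici 0 ×ˢ Set.Ici 0) := by
  have inc1 : ∀ {x X y : ℝ}, 0 ≤ x → x ≤ X → 0 ≤ y → Λ (X, y) ≤ Λ (x, y) + (X - x) := by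
    intro x X y hx hX hy
    refine increment_le (f := fun t => Λ (t, y)) ⟨convex_Ici 0, ?_⟩
      (fun t ht => (hbds t y ht hy).1)
      (fun t ht => (hbds t y ht hy).2.trans (min_le_left _ _)) hx hX
    intro s hs t ht a b ha hb hab
    have h := hconc.2 (show (s, y) ∈ (Set.Ici 0 ×ˢ Set.Ici 0 : Set (ℝ × ℝ)) from ⟨hs, hy⟩)
      (show (t, y) ∈ (Set.Ici 0 ×ˢ Set.Ici 0 : Set (ℝ × ℝ)) from ⟨ht, hy⟩) ha hb hab
    simpa [← add_mul, hab] using h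
  have inc2 : ∀ {x y Y : ℝ}, 0 ≤ x → 0 ≤ y → y ≤ Y → Λ (x, Y) ≤ Λ (x, y) + (Y - y) := by
    intro x y Y hx hy hY
    refine increment_le (f := fun t => Λ (x, t)) ⟨convex_Ici 0, ?_⟩
      (fun t ht => (hbds x t hx ht).1)
      (fun t ht => (hbds x t hx ht).2.trans (min_le_right _ _)) hy hY
    intro s hs t ht a b ha hb hab
    have h := hconc.2 (show (x, s) ∈ (Set.Ici 0 ×ˢ Set.Ici 0 : Set (ℝ × ℝ)) from ⟨hx, hs⟩)
      (show (x, t) ∈ (Set.Ici 0 ×ˢ Set.Ici 0 : Set (ℝ × ℝ)) from ⟨hx, ht⟩) ha hb hab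
    simpa [← add_mul, hab] using h
  refine (LipschitzOnWith.of_le_add_mul (K := 2) ?_).continuousOn
  rintro ⟨x, y⟩ ⟨hx, hy⟩ ⟨x', y'⟩ ⟨hx', hy'⟩
  simp only [Set.mem_Ici] at hx hy hx' hy'
  -- Compare both points with their coordinatewise maximum.
  have m := tail_mono Λ hconc hhom hbds hx hy (le_max_left x x') (le_max_left y y')
  have i1 := inc1 hx' (le_max_right x x') (hy.trans (le_max_left y y'))
  have i2 := inc2 hx' hy' (le_max_right y y')
  have d1 : max x x' - x' ≤ dist (x, y) (x', y') := by
    refine le_trans ?_ (le_max_left (dist x x') (dist y y'))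
    rw [Real.dist_eq, sub_le_iff_le_add]
    exact max_le (by linarith [le_abs_self (x - x')]) (by linarith [abs_nonneg (x - x')])
  have d2 : max y y' - y' ≤ dist (x, y) (x', y') := by
    refine le_trans ?_ (le_max_right (dist x x') (dist y y'))
    rw [Real.dist_eq, sub_le_iff_le_add]
    exact max_le (by linarith [le_abs_self (y - y')]) (by linarith [abs_nonneg (y - y')])
  push_cast
  linarith
end

section
/- There exist functions Λ₁, Λ₂ : [0,1] → ℝ, each concave on [0,1] and satisfying 0 ≤ Λᵢ(s) ≤ min(s, 1−s) for all s ∈ [0,1], such that 2Λ₁(1/2) = 2Λ₂(1/2) (i.e., their tail dependence coefficients coincide), yet neither Λ₁(s) ≤ Λ₂(s) for all s ∈ [0,1] nor Λ₂(s) ≤ Λ₁(s) for all s ∈ [0,1]. Concretely, Λ₁(s) = s(1−s) and Λ₂(s) = min(s/2, 1−s) satisfy all of these properties. -/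
/-! Both functions take the value `1/4` at `s = 1/2`. The parabola `s (1 - s)` is concave, and
`min (s/2) (1 - s)` is concave as a minimum of two affine functions. They cross at `1/2`: at
`s = 1/4` the parabola is larger (`3/16 > 1/8`), at `s = 3/5` it is smaller (`6/25 < 3/10`). -/

/-- There are two (restricted) tail dependence functions with equal tail
dependence coefficients which are not comparable in the tail dependence order;
concretely `Λ₁ s = s (1 - s)` and `Λ₂ s = min (s/2) (1-s)`. -/
theorem tdc_equal_but_not_ordered :
    ∃ Λ₁ Λ₂ : ℝ → ℝ,
      ConcaveOn ℝ (Set.Icc 0 1) Λ₁ ∧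
      (∀ s ∈ Set.Icc (0:ℝ) 1, 0 ≤ Λ₁ s ∧ Λ₁ s ≤ min s (1 - s)) ∧
      ConcaveOn ℝ (Set.Icc 0 1) Λ₂ ∧
      (∀ s ∈ Set.Icc (0:ℝ) 1, 0 ≤ Λ₂ s ∧ Λ₂ s ≤ min s (1 - s)) ∧
      2 * Λ₁ (1/2) = 2 * Λ₂ (1/2) ∧
      ¬ (∀ s ∈ Set.Icc (0:ℝ) 1, Λ₁ s ≤ Λ₂ s) ∧
      ¬ (∀ s ∈ Set.Icc (0:ℝ) 1, Λ₂ s ≤ Λ₁ s) ∧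
      Λ₁ = (fun s => s * (1 - s)) ∧
      Λ₂ = (fun s => min (s / 2) (1 - s)) := by
  refine ⟨fun s => s * (1 - s), fun s => min (s / 2) (1 - s), ?_, ?_, ?_, ?_, ?_, ?_, ?_, rfl, rfl⟩
  · refine ⟨convex_Icc 0 1, ?_⟩
    intro x _ y _ a b ha hb hab
    simp only [smul_eq_mul]
    obtain rfl : b = 1 - a := by linarith
    -- the concavity defect is exactly `a * (1 - a) * (x - y) ^ 2`
    nlinarith [mul_nonneg (mul_nonneg ha hb) (sq_nonneg (x - y))]
  · rintro s ⟨h0, h1⟩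
    refine ⟨mul_nonneg h0 (by linarith), le_min ?_ ?_⟩ <;> nlinarith
  · refine ⟨convex_Icc 0 1, ?_⟩
    intro x _ y _ a b ha hb hab
    simp only [smul_eq_mul]
    obtain rfl : b = 1 - a := by linarith
    have hx₁ := mul_le_mul_of_nonneg_left (min_le_left (x / 2) (1 - x)) ha
    have hx₂ := mul_le_mul_of_nonneg_left (min_le_right (x / 2) (1 - x)) ha
    have hy₁ := mul_le_mul_of_nonneg_left (min_le_left (y / 2) (1 - y)) hb
    have hy₂ := mul_le_mul_of_nonneg_left (min_le_right (y / 2) (1 - y)) hb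
    refine le_min ?_ ?_ <;> linarith
  · rintro s ⟨h0, h1⟩
    exact ⟨le_min (by linarith) (by linarith), min_le_min_right _ (by linarith)⟩
  · norm_num
  · intro h
    have := h (1 / 4) (by norm_num)
    norm_num at this
  · intro h
    have := h (3 / 5) (by norm_num)
    norm_num at this
end

section
/- There exist functions Λ₁, Λ₂ : [0,1] → ℝ, each concave on [0,1] and satisfying 0 ≤ Λᵢ(s) ≤ min(s, 1−s) for all s ∈ [0,1], such that sup_{s ∈ [0,1]} Λ₁(s) > sup_{s ∈ [0,1]} Λ₂(s) while ∫₀¹ Λ₁(s) ds < ∫₀¹ Λ₂(s) ds. Concretely, Λ₁(s) = min(2s/5, 1−s) (with sup equal to 2/7 and integral equal to 1/7) and Λ₂(s) = s(1−s) (with sup equal to 1/4 and integral equal to 1/6) satisfy all of these properties. -/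
/-!
Both functions are explicit. `min (2s/5) (1-s)` is a minimum of two affine functions which cross
at `s = 5/7`; its maximum `2/7` is attained there, and splitting the integral at the crossing point
gives `5/49 + 2/49 = 1/7`. The parabola `s (1-s)` has maximum `1/4` at `s = 1/2` and integral
`1/2 - 1/3 = 1/6`. Hence `2/7 > 1/4` whereas `1/7 < 1/6`.
-/

theorem tent_concaveOn :
    ConcaveOn ℝ (Set.Icc 0 1) (fun s : ℝ => min (2 * s / 5) (1 - s)) := by
  have h₁ : ConcaveOn ℝ (Set.Icc (0:ℝ) 1) (fun s : ℝ => 2 * s / 5) :=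
    ⟨convex_Icc 0 1, fun x _ y _ a b _ _ _ => by
      simp only [smul_eq_mul]; exact le_of_eq (by ring)⟩
  have h₂ : ConcaveOn ℝ (Set.Icc (0:ℝ) 1) (fun s : ℝ => 1 - s) :=
    ⟨convex_Icc 0 1, fun x _ y _ a b _ _ hab => by
      simp only [smul_eq_mul]; linarith⟩
  exact h₁.inf h₂

theorem parabola_concaveOn :
    ConcaveOn ℝ (Set.Icc 0 1) (fun s : ℝ => s * (1 - s)) := by
  refine ⟨convex_Icc 0 1, fun x _ y _ a b ha hb hab => ?_⟩
  simp only [smul_eq_mul]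
  obtain rfl : b = 1 - a := by linarith
  -- The concavity defect is exactly `a (1 - a) (x - y)²`.
  nlinarith [mul_nonneg (mul_nonneg ha hb) (sq_nonneg (x - y))]

theorem tent_sSup :
    sSup ((fun s : ℝ => min (2 * s / 5) (1 - s)) '' Set.Icc 0 1) = 2 / 7 := by
  refine IsGreatest.csSup_eq ⟨⟨5 / 7, by norm_num, by norm_num⟩, ?_⟩
  rintro _ ⟨s, -, rfl⟩
  rcases le_total s (5 / 7) with h | h
  · exact (min_le_left _ _).trans (by linarith)
  · exact (min_le_right _ _).trans (by linarith)

theorem parabola_sSup :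
    sSup ((fun s : ℝ => s * (1 - s)) '' Set.Icc 0 1) = 1 / 4 := by
  refine IsGreatest.csSup_eq ⟨⟨1 / 2, by norm_num, by norm_num⟩, ?_⟩
  rintro _ ⟨s, -, rfl⟩
  dsimp only
  nlinarith [sq_nonneg (s - 1 / 2)]

theorem tent_integral : ∫ s in (0:ℝ)..1, min (2 * s / 5) (1 - s) = 1 / 7 := by
  have hc : Continuous fun s : ℝ => min (2 * s / 5) (1 - s) := by fun_prop
  have h₁ : ∫ s in (0:ℝ)..(5 / 7), min (2 * s / 5) (1 - s) = ∫ s in (0:ℝ)..(5 / 7), (2 / 5) * s := by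
    refine intervalIntegral.integral_congr fun s hs => ?_
    rw [Set.uIcc_of_le (by norm_num)] at hs
    rw [min_eq_left (by linarith [hs.2])]
    ring
  have h₂ : ∫ s in (5 / 7 : ℝ)..1, min (2 * s / 5) (1 - s) = ∫ s in (5 / 7 : ℝ)..1, (1 - s) := by
    refine intervalIntegral.integral_congr fun s hs => ?_
    rw [Set.uIcc_of_le (by norm_num)] at hs
    exact min_eq_right (by linarith [hs.1])
  rw [← intervalIntegral.integral_add_adjacent_intervals (hc.intervalIntegrable 0 (5 / 7))
    (hc.intervalIntegrable (5 / 7) 1), h₁, h₂, intervalIntegral.integral_const_mul,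
    intervalIntegral.integral_sub (by simp) (by simp), integral_id, integral_id,
    intervalIntegral.integral_const]
  norm_num

theorem parabola_integral : ∫ s in (0:ℝ)..1, s * (1 - s) = 1 / 6 := by
  have h : ∀ s : ℝ, s * (1 - s) = s - s ^ 2 := fun s => by ring
  simp only [h]
  rw [intervalIntegral.integral_sub (by simp) (by simp), integral_id, integral_pow]
  norm_num

/-- The maximal tail dependence and the average tail dependence can rank two
tail dependence functions in opposite ways; concretely for
`Λ₁ s = min (2s/5) (1-s)` and `Λ₂ s = s (1-s)`. -/
theorem max_and_average_can_disagree :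
    ∃ Λ₁ Λ₂ : ℝ → ℝ,
      ConcaveOn ℝ (Set.Icc 0 1) Λ₁ ∧
      (∀ s ∈ Set.Icc (0:ℝ) 1, 0 ≤ Λ₁ s ∧ Λ₁ s ≤ min s (1 - s)) ∧
      ConcaveOn ℝ (Set.Icc 0 1) Λ₂ ∧
      (∀ s ∈ Set.Icc (0:ℝ) 1, 0 ≤ Λ₂ s ∧ Λ₂ s ≤ min s (1 - s)) ∧
      sSup (Λ₁ '' Set.Icc 0 1) > sSup (Λ₂ '' Set.Icc 0 1) ∧
      (∫ s in (0:ℝ)..1, Λ₁ s) < ∫ s in (0:ℝ)..1, Λ₂ s ∧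
      Λ₁ = (fun s => min (2 * s / 5) (1 - s)) ∧
      Λ₂ = (fun s => s * (1 - s)) ∧
      sSup (Λ₁ '' Set.Icc 0 1) = 2 / 7 ∧
      (∫ s in (0:ℝ)..1, Λ₁ s) = 1 / 7 ∧
      sSup (Λ₂ '' Set.Icc 0 1) = 1 / 4 ∧
      (∫ s in (0:ℝ)..1, Λ₂ s) = 1 / 6 := by
  refine ⟨fun s => min (2 * s / 5) (1 - s), fun s => s * (1 - s), tent_concaveOn, ?_,
    parabola_concaveOn, ?_, ?_, ?_, rfl, rfl, tent_sSup, tent_integral, parabola_sSup,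
    parabola_integral⟩
  · rintro s ⟨h0, h1⟩
    exact ⟨le_min (by linarith) (by linarith), min_le_min_right _ (by linarith)⟩
  · rintro s ⟨h0, h1⟩
    exact ⟨mul_nonneg h0 (by linarith), le_min (by nlinarith) (by nlinarith)⟩
  · rw [tent_sSup, parabola_sSup]
    norm_num
  · rw [tent_integral, parabola_integral]
    norm_num
end

section
/- Let Λ : [0,1] → ℝ be concave on [0,1] with 0 ≤ Λ(s) ≤ min(s, 1−s) for all s ∈ [0,1], and set λ = 2Λ(1/2). Then λ/2 ≤ sup_{s ∈ [0,1]} Λ(s) ≤ λ/(1 + λ). -/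
/-!
The lower bound is the value at `1/2`. For the upper bound at `s ≤ 1/2`, concavity between `s` and
`1` together with `Λ 1 ≥ 0` gives `Λ s ≤ lam * (1 - s)`; for `s ≥ 1/2`, concavity between `0` and
`s` gives `Λ s ≤ lam * s`. In each case the remaining factor is at most `1 - Λ s`, because
`Λ s ≤ min s (1 - s)`, so `Λ s ≤ lam * (1 - Λ s)`, which rearranges to `Λ s ≤ lam / (1 + lam)`.
-/

/-- Range of the maximal tail dependence given the tail dependence coefficient:
`λ/2 ≤ max_{s ∈ [0,1]} Λ(s) ≤ λ/(1 + λ)` where `λ = 2 Λ(1/2)`. -/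
theorem max_tail_dependence_range (Λ : ℝ → ℝ)
    (hconc : ConcaveOn ℝ (Set.Icc 0 1) Λ)
    (hbds : ∀ s ∈ Set.Icc (0:ℝ) 1, 0 ≤ Λ s ∧ Λ s ≤ min s (1 - s))
    (lam : ℝ) (hlam : lam = 2 * Λ (1/2)) :
    lam / 2 ≤ sSup (Λ '' Set.Icc 0 1) ∧
      sSup (Λ '' Set.Icc 0 1) ≤ lam / (1 + lam) := by
  have h0 : (0:ℝ) ∈ Set.Icc (0:ℝ) 1 := by simp
  have h1 : (1:ℝ) ∈ Set.Icc (0:ℝ) 1 := by simp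
  have h2 : (1/2:ℝ) ∈ Set.Icc (0:ℝ) 1 := by constructor <;> norm_num
  have hl : 0 ≤ lam := by linarith [(hbds _ h2).1]
  have key : ∀ s ∈ Set.Icc (0:ℝ) 1, Λ s ≤ lam / (1 + lam) := by
    intro s hs
    obtain ⟨-, hmin⟩ := hbds s hs
    have hm1 := hmin.trans (min_le_left _ _)
    have hm2 := hmin.trans (min_le_right _ _)
    rw [le_div_iff₀ (by linarith)]
    rcases le_total s (1/2) with h | h
    · have hp : 0 < 1 - s := by linarith
      have hb : 0 ≤ 1 - 1 / (2 * (1 - s)) := by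
        rw [sub_nonneg, div_le_one (by positivity)]; linarith
      have ha : 0 ≤ 1 / (2 * (1 - s)) := by positivity
      have hc := hconc.2 hs h1 ha hb (by ring)
      have he : 1 / (2 * (1 - s)) * s + (1 - 1 / (2 * (1 - s))) * 1 = 1 / 2 := by
        field_simp; ring
      simp only [smul_eq_mul] at hc
      rw [he] at hc
      have hd : 1 / (2 * (1 - s)) * Λ s ≤ lam / 2 := by
        linarith [mul_nonneg hb (hbds 1 h1).1]
      rw [one_div_mul_eq_div, div_le_iff₀ (by positivity)] at hd
      nlinarith [mul_le_mul_of_nonneg_left hm1 hl]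
    · have hp : 0 < s := by linarith
      have hb : 0 ≤ 1 - 1 / (2 * s) := by
        rw [sub_nonneg, div_le_one (by positivity)]; linarith
      have ha : 0 ≤ 1 / (2 * s) := by positivity
      have hc := hconc.2 hs h0 ha hb (by ring)
      have he : 1 / (2 * s) * s + (1 - 1 / (2 * s)) * 0 = 1 / 2 := by
        field_simp; ring
      simp only [smul_eq_mul] at hc
      rw [he] at hc
      have hd : 1 / (2 * s) * Λ s ≤ lam / 2 := by
        linarith [mul_nonneg hb (hbds 0 h0).1]
      rw [one_div_mul_eq_div, div_le_iff₀ (by positivity)] at hd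
      nlinarith [mul_le_mul_of_nonneg_left hm2 hl]
  constructor
  · have hbdd : BddAbove (Λ '' Set.Icc 0 1) :=
      ⟨lam / (1 + lam), by rintro _ ⟨s, hs, rfl⟩; exact key s hs⟩
    have := le_csSup hbdd (Set.mem_image_of_mem Λ h2)
    linarith
  · apply csSup_le ⟨_, Set.mem_image_of_mem Λ h2⟩
    rintro _ ⟨s, hs, rfl⟩
    exact key s hs
end
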